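/- Let 1/2 < α < 1 and let t satisfy απ ≤ t ≤ π. Then the infimum over all f ∈ K(α) and z ∈ 𝔻 \ {0} of Re(e^{it}·f(z)/z) equals (cos t)/(2α−1); that is, Q_α(t) = (2α−1)^{−1} cos t. -/

import Mathlib

/-- The unit disk `{z : ℂ | |z| < 1}`. -/
noncomputable def unitDisk : Set ℂ := Metric.ball 0 1

/-- The extremal convex function of order `α`:
`k_α(z) = ((1-z)^(2α-1) - 1)/(1-2α)` (so that `k_α(0)=0`, `k_α'(0)=1`),
with `k_{1/2}(z) = -log(1-z)` (principal branches). -/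
noncomputable def kfun (α : ℝ) (z : ℂ) : ℂ :=
  if α = 1 / 2 then -Complex.log (1 - z)
  else ((1 - z) ^ ((2 * α - 1 : ℝ) : ℂ) - 1) / ((1 - 2 * α : ℝ) : ℂ)

/-- `h_α(z) = k_α(z)/z` for `z ≠ 0`, `h_α(0) = 1`. -/
noncomputable def hfun (α : ℝ) (z : ℂ) : ℂ :=
  if z = 0 then 1 else kfun α z / z

/-- `f ∈ K(α)`: `f` is analytic on the unit disk, normalized by `f(0)=0`, `f'(0)=1`,
with nonvanishing derivative and `Re(1 + z f''(z)/f'(z)) > α` on the disk. -/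
def IsConvexOfOrder (α : ℝ) (f : ℂ → ℂ) : Prop :=
  DifferentiableOn ℂ f unitDisk ∧ f 0 = 0 ∧ deriv f 0 = 1 ∧
    ∀ z ∈ unitDisk, deriv f z ≠ 0 ∧
      α < (1 + z * deriv (deriv f) z / deriv f z).re

open MeasureTheory Set Filter Topology
open scoped Real ComplexConjugate

/-!
Let `β = 2 * α - 1`. For `f ∈ K(α)` write `f z / z = ∫ s in 0..1, f' (z * s)` and
`f' (z * s) = (1 - s) ^ β * Ψ s`. Convexity of order `α` bounds `s * Ψ' s / Ψ s` from below by
`-1 / 2` in real part, whence `1 / 2 < re Ψ` by Jack's lemma, so `Ψ` is an average of the kernels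
`s ↦ ζ / (ζ - s)` with `‖ζ‖ = 1`. It therefore suffices to show
`cos t / β ≤ re (exp (i t) * ∫ s in 0..1, (1 - s) ^ β * (ζ / (ζ - s)))`. The substitution
`s = (1 - x) / (1 + x)` turns the difference of the two sides into an integral whose sign follows
from comparing the antitone weight `(1 - x)⁺ * (1 + x) ^ (-(1 + β))` with its value at the only
sign change of the remaining factor, whose integral is given by Euler's reflection formula.
Equality is approached by `kfun α x / x` as `x → 1⁻`.
-/

theorem integral_Ioo_rpow_mul_one_sub_rpow {a b : ℝ} (ha : 0 < a) (hb : 0 < b) :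
    ∫ u in Ioo (0 : ℝ) 1, u ^ (a - 1) * (1 - u) ^ (b - 1) = ProbabilityTheory.beta a b := by
  have hcast : ∀ u ∈ Ioo (0 : ℝ) 1, (u : ℂ) ^ ((a : ℂ) - 1) * (1 - u) ^ ((b : ℂ) - 1) =
      ((u ^ (a - 1) * (1 - u) ^ (b - 1) : ℝ) : ℂ) := fun u hu => by
    push_cast [Complex.ofReal_cpow hu.1.le, Complex.ofReal_cpow (sub_nonneg.2 hu.2.le)]
    rfl
  rw [ProbabilityTheory.beta_eq_betaIntegralReal a b ha hb, Complex.betaIntegral,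
    intervalIntegral.integral_of_le zero_le_one, integral_Ioc_eq_integral_Ioo,
    setIntegral_congr_fun measurableSet_Ioo hcast, integral_complex_ofReal, Complex.ofReal_re]

theorem image_div_one_add_Ioi : (fun x : ℝ => x / (1 + x)) '' Ioi 0 = Ioo 0 1 := by
  ext u
  refine ⟨?_, fun ⟨h0, h1⟩ => ⟨u / (1 - u), div_pos h0 (sub_pos.2 h1), ?_⟩⟩
  · rintro ⟨x, hx : 0 < x, rfl⟩
    exact ⟨by positivity, (div_lt_one (by positivity)).2 (by linarith)⟩
  · have : 1 - u ≠ 0 := (sub_pos.2 h1).ne'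
    simp only
    field_simp
    ring

theorem integral_Ioi_rpow_div_one_add_rpow {a b : ℝ} (ha : 0 < a) (hb : 0 < b) :
    ∫ x in Ioi (0 : ℝ), x ^ (a - 1) / (1 + x) ^ (a + b) = ProbabilityTheory.beta a b := by
  have hderiv : ∀ x ∈ Ioi (0 : ℝ),
      HasDerivWithinAt (fun x : ℝ => x / (1 + x)) (1 / (1 + x) ^ 2) (Ioi 0) x :=
    fun x (hx : 0 < x) => (((hasDerivAt_id x).div ((hasDerivAt_id x).const_add 1)
      (by simp only [id]; positivity)).congr_deriv (by simp)).hasDerivWithinAt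
  have hmono : MonotoneOn (fun x : ℝ => x / (1 + x)) (Ioi 0) :=
    fun x (hx : 0 < x) y (hy : 0 < y) hxy => by
      simp only
      rw [div_le_div_iff₀ (by positivity) (by positivity)]
      linarith
  rw [← integral_Ioo_rpow_mul_one_sub_rpow ha hb, ← image_div_one_add_Ioi,
    integral_image_eq_integral_deriv_smul_of_monotoneOn measurableSet_Ioi hderiv hmono]
  refine setIntegral_congr_fun measurableSet_Ioi fun x (hx : 0 < x) => ?_
  have hx1 : 0 < 1 + x := by positivity
  have hsub : 1 - x / (1 + x) = (1 + x)⁻¹ := by field_simp; ring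
  have hexp : (1 + x) ^ (a + b) = (1 + x) ^ (a - 1) * (1 + x) ^ (b - 1) * (1 + x) ^ 2 := by
    rw [← Real.rpow_add hx1, ← Real.rpow_add_natCast hx1.ne']
    congr 1
    push_cast
    ring
  simp only [hsub, smul_eq_mul]
  rw [Real.div_rpow hx.le hx1.le, Real.inv_rpow hx1.le, hexp]
  field_simp

theorem integral_Ioi_rpow_div_one_add {a : ℝ} (ha0 : 0 < a) (ha1 : a < 1) :
    ∫ x in Ioi (0 : ℝ), x ^ (a - 1) / (1 + x) = π / Real.sin (π * a) := by
  have h := integral_Ioi_rpow_div_one_add_rpow ha0 (sub_pos.2 ha1)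
  simpa only [ProbabilityTheory.beta, Real.Gamma_mul_Gamma_one_sub, add_sub_cancel, Real.Gamma_one,
    div_one, Real.rpow_one] using h

theorem integral_Ioi_rpow_div_one_add_sq {p : ℝ} (hp0 : 0 < p) (hp2 : p < 2) :
    ∫ x in Ioi (0 : ℝ), x ^ (p - 1) / (1 + x ^ 2) = π / (2 * Real.sin (π * p / 2)) := by
  have h := integral_Ioi_rpow_div_one_add (a := p / 2) (by linarith) (by linarith)
  rw [← integral_comp_rpow_Ioi_of_pos two_pos, ← mul_div_assoc] at h
  have hpt : ∀ x ∈ Ioi (0 : ℝ), (2 * x ^ ((2 : ℝ) - 1)) •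
      ((x ^ (2 : ℝ)) ^ (p / 2 - 1) / (1 + x ^ (2 : ℝ))) = 2 * (x ^ (p - 1) / (1 + x ^ 2)) :=
    fun x (hx : 0 < x) => by
      rw [← Real.rpow_mul hx.le, smul_eq_mul, mul_div_assoc', mul_assoc, ← Real.rpow_add hx,
        Real.rpow_two, mul_div_assoc]
      ring_nf
  rw [setIntegral_congr_fun measurableSet_Ioi hpt, integral_const_mul] at h
  rw [mul_comm 2, ← div_div, ← h]
  ring

theorem integrableOn_Ioi_rpow_div_one_add_sq {p : ℝ} (hp0 : 0 < p) (hp2 : p < 2) :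
    IntegrableOn (fun x : ℝ => x ^ (p - 1) / (1 + x ^ 2)) (Ioi 0) := by
  have hsin : 0 < Real.sin (π * p / 2) :=
    Real.sin_pos_of_pos_of_lt_pi (by positivity) (by nlinarith [Real.pi_pos])
  refine Integrable.of_integral_ne_zero ?_
  rw [integral_Ioi_rpow_div_one_add_sq hp0 hp2]
  positivity

section Moment

variable {β A B : ℝ}

theorem rpow_sub_one_mul_sub_div_one_add_sq {x : ℝ} (hx : 0 < x) :
    A * (x ^ (β - 1) / (1 + x ^ 2)) - B * (x ^ (β + 1 - 1) / (1 + x ^ 2)) =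
      x ^ (β - 1) * (A - B * x) / (1 + x ^ 2) := by
  rw [add_sub_right_comm, Real.rpow_add_one hx.ne']
  ring

theorem integrableOn_rpow_mul_sub_div_one_add_sq (hβ0 : 0 < β) (hβ1 : β < 1) :
    IntegrableOn (fun x : ℝ => x ^ (β - 1) * (A - B * x) / (1 + x ^ 2)) (Ioi 0) :=
  (integrableOn_congr_fun (fun _ hx => rpow_sub_one_mul_sub_div_one_add_sq hx)
    measurableSet_Ioi).1
    (((integrableOn_Ioi_rpow_div_one_add_sq hβ0 (by linarith)).const_mul A).sub
      ((integrableOn_Ioi_rpow_div_one_add_sq (by linarith) (by linarith)).const_mul B))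

theorem integral_rpow_mul_sub_div_one_add_sq (hβ0 : 0 < β) (hβ1 : β < 1) :
    ∫ x in Ioi (0 : ℝ), x ^ (β - 1) * (A - B * x) / (1 + x ^ 2) =
      π / Real.sin (π * β) * (A * Real.cos (π * β / 2) - B * Real.sin (π * β / 2)) := by
  have hsin : 0 < Real.sin (π * β / 2) :=
    Real.sin_pos_of_pos_of_lt_pi (by positivity) (by nlinarith [Real.pi_pos])
  have hcos : 0 < Real.cos (π * β / 2) :=
    Real.cos_pos_of_mem_Ioo ⟨by nlinarith [Real.pi_pos], by nlinarith [Real.pi_pos]⟩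
  have htwo : Real.sin (π * β) = 2 * Real.sin (π * β / 2) * Real.cos (π * β / 2) := by
    rw [← Real.sin_two_mul]
    ring_nf
  have hshift : π * (β + 1) / 2 = π * β / 2 + π / 2 := by ring
  rw [← setIntegral_congr_fun measurableSet_Ioi
      fun _ hx => rpow_sub_one_mul_sub_div_one_add_sq hx,
    integral_sub ((integrableOn_Ioi_rpow_div_one_add_sq hβ0 (by linarith)).const_mul A)
      ((integrableOn_Ioi_rpow_div_one_add_sq (by linarith) (by linarith)).const_mul B),
    integral_const_mul, integral_const_mul,
    integral_Ioi_rpow_div_one_add_sq hβ0 (by linarith),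
    integral_Ioi_rpow_div_one_add_sq (by linarith) (by linarith), hshift,
    Real.sin_add_pi_div_two, htwo]
  field_simp

theorem rpow_mul_sub_div_one_add_sq_comp_mul {c x : ℝ} (hc : 0 < c) (hx : 0 < x) :
    x ^ (β - 1) * (A - B * (c * x)) / (1 + (c * x) ^ 2) =
      c ^ (1 - β) * ((c * x) ^ (β - 1) * (A - B * (c * x)) / (1 + (c * x) ^ 2)) := by
  rw [Real.mul_rpow hc.le hx.le, ← neg_sub β 1, Real.rpow_neg hc.le]
  have : 0 < c ^ (β - 1) := by positivity
  field_simp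

theorem integrableOn_rpow_mul_sub_div_one_add_mul_sq {c : ℝ} (hβ0 : 0 < β) (hβ1 : β < 1)
    (hc : 0 < c) :
    IntegrableOn (fun x : ℝ => x ^ (β - 1) * (A - B * (c * x)) / (1 + (c * x) ^ 2)) (Ioi 0) := by
  have h := integrableOn_rpow_mul_sub_div_one_add_sq (A := A) (B := B) hβ0 hβ1
  rw [← mul_zero c, ← integrableOn_Ioi_comp_mul_left_iff _ _ hc] at h
  exact (integrableOn_congr_fun (fun _ hx => rpow_mul_sub_div_one_add_sq_comp_mul hc hx)
    measurableSet_Ioi).2 (h.const_mul _)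

theorem integral_rpow_mul_sub_div_one_add_mul_sq_nonneg {c : ℝ} (hβ0 : 0 < β) (hβ1 : β < 1)
    (hc : 0 < c) (hAB : B * Real.sin (π * β / 2) ≤ A * Real.cos (π * β / 2)) :
    0 ≤ ∫ x in Ioi (0 : ℝ), x ^ (β - 1) * (A - B * (c * x)) / (1 + (c * x) ^ 2) := by
  have hsin : 0 < Real.sin (π * β) :=
    Real.sin_pos_of_pos_of_lt_pi (by positivity) (by nlinarith [Real.pi_pos])
  rw [setIntegral_congr_fun measurableSet_Ioi
      fun _ hx => rpow_mul_sub_div_one_add_sq_comp_mul hc hx, integral_const_mul,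
    integral_comp_mul_left_Ioi
      (fun y : ℝ => y ^ (β - 1) * (A - B * y) / (1 + y ^ 2)) 0 hc, mul_zero,
    integral_rpow_mul_sub_div_one_add_sq hβ0 hβ1, smul_eq_mul]
  have := sub_nonneg.2 hAB
  positivity

end Moment

theorem setIntegral_mul_ge_of_antitoneOn_of_crossing {s : Set ℝ} {μ : Measure ℝ} {W h : ℝ → ℝ}
    {a : ℝ} (hs : MeasurableSet s) (ha : a ∈ s) (hW : AntitoneOn W s)
    (hcross : ∀ x ∈ s, 0 ≤ (a - x) * h x) (hh : IntegrableOn h s μ)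
    (hWh : IntegrableOn (fun x => W x * h x) s μ) :
    W a * ∫ x in s, h x ∂μ ≤ ∫ x in s, W x * h x ∂μ := by
  rw [← integral_const_mul]
  refine setIntegral_mono_on (hh.const_mul _) hWh hs fun x hx => ?_
  rcases lt_trichotomy x a with hxa | rfl | hax
  · exact mul_le_mul_of_nonneg_right (hW hx ha hxa.le)
      (nonneg_of_mul_nonneg_right (hcross x hx) (sub_pos.2 hxa))
  · rfl
  · exact mul_le_mul_of_nonpos_right (hW ha hx hax.le)
      (nonpos_of_mul_nonneg_right (hcross x hx) (sub_neg.2 hax))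

theorem image_one_sub_div_one_add_Ioo : (fun x : ℝ => (1 - x) / (1 + x)) '' Ioo 0 1 = Ioo 0 1 := by
  have hmaps : MapsTo (fun x : ℝ => (1 - x) / (1 + x)) (Ioo 0 1) (Ioo 0 1) := fun x ⟨h0, h1⟩ =>
    ⟨div_pos (by linarith) (by linarith), (div_lt_one (by linarith)).2 (by linarith)⟩
  refine hmaps.image_subset.antisymm fun x hx => ⟨_, hmaps hx, ?_⟩
  have : 1 + x ≠ 0 := by linarith [hx.1]
  simp only
  field_simp
  ring

theorem integral_Ioo_comp_one_sub_div_one_add {E : Type*} [NormedAddCommGroup E] [NormedSpace ℝ E]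
    (g : ℝ → E) :
    ∫ x in Ioo (0 : ℝ) 1, (2 / (1 + x) ^ 2) • g ((1 - x) / (1 + x)) =
      ∫ s in Ioo (0 : ℝ) 1, g s := by
  have hderiv : ∀ x ∈ Ioo (0 : ℝ) 1,
      HasDerivWithinAt (fun x : ℝ => (1 - x) / (1 + x)) (-(2 / (1 + x) ^ 2)) (Ioo 0 1) x :=
    fun x ⟨h0, _⟩ => ((((hasDerivAt_id x).const_sub 1).div ((hasDerivAt_id x).const_add 1)
      (by simp only [id]; positivity)).congr_deriv (by simp only [id]; ring)).hasDerivWithinAt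
  have hanti : AntitoneOn (fun x : ℝ => (1 - x) / (1 + x)) (Ioo 0 1) :=
    fun x ⟨hx, _⟩ y ⟨hy, _⟩ hxy => by
      simp only
      rw [div_le_div_iff₀ (by positivity) (by positivity)]
      linarith
  have h := integral_image_eq_integral_deriv_smul_of_antitoneOn measurableSet_Ioo hderiv hanti g
  simpa only [image_one_sub_div_one_add_Ioo, neg_neg] using h.symm

section Crossing

variable {β A B c : ℝ}

theorem antitoneOn_max_one_sub_mul_rpow {γ : ℝ} (hγ : 0 ≤ γ) :
    AntitoneOn (fun x : ℝ => max (1 - x) 0 * (1 + x) ^ (-γ)) (Ioi 0) :=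
  fun x (hx : 0 < x) y hy hxy => mul_le_mul (by gcongr)
    (Real.rpow_le_rpow_of_nonpos (by linarith) (by linarith) (by linarith))
    (Real.rpow_nonneg (by linarith [mem_Ioi.1 hy]) _) (le_max_right _ _)

theorem norm_max_one_sub_mul_rpow_le {γ x : ℝ} (hγ : 0 ≤ γ) (hx : 0 ≤ x) :
    ‖max (1 - x) 0 * (1 + x) ^ (-γ)‖ ≤ 1 := by
  rw [Real.norm_of_nonneg (by positivity)]
  exact mul_le_one₀ (max_le (by linarith) zero_le_one) (by positivity)
    (Real.rpow_le_one_of_one_le_of_nonpos (by linarith) (by linarith))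

theorem integral_Ioo_rpow_mul_sub_div_eq :
    ∫ s in Ioo (0 : ℝ) 1, (1 - s) ^ (β - 1) *
        (2 * s * (A * (1 + s) - B * (c * (1 - s))) / ((1 + s) ^ 2 + (c * (1 - s)) ^ 2)) =
      2 ^ β * ∫ x in Ioi (0 : ℝ), max (1 - x) 0 * (1 + x) ^ (-(1 + β)) *
        (x ^ (β - 1) * (A - B * (c * x)) / (1 + (c * x) ^ 2)) := by
  rw [setIntegral_eq_of_subset_of_forall_sdiff_eq_zero measurableSet_Ioi
      (Ioo_subset_Ioi_self : Ioo (0 : ℝ) 1 ⊆ Ioi 0) fun x ⟨h0, h1⟩ => ?_,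
    ← integral_Ioo_comp_one_sub_div_one_add, ← integral_const_mul]
  · refine setIntegral_congr_fun measurableSet_Ioo fun x ⟨h0, h1⟩ => ?_
    have hx1 : 0 < 1 + x := by linarith
    have hsub : 1 - (1 - x) / (1 + x) = 2 * x / (1 + x) := by field_simp; ring
    have hadd : 1 + (1 - x) / (1 + x) = 2 / (1 + x) := by field_simp; ring
    have hexp : (1 + x) ^ (-(1 + β)) = ((1 + x) ^ (β - 1) * (1 + x) ^ 2)⁻¹ := by
      rw [Real.rpow_neg hx1.le, ← Real.rpow_add_natCast hx1.ne']
      congr 2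
      push_cast
      ring
    have : 0 < 1 + (c * x) ^ 2 := by positivity
    have : 0 < (2 / (1 + x)) ^ 2 + (c * (2 * x / (1 + x))) ^ 2 := by positivity
    have h2β : (2 : ℝ) ^ β = 2 ^ (β - 1) * 2 := by
      rw [Real.rpow_sub_one two_ne_zero]; ring
    simp only [hsub, hadd, smul_eq_mul]
    rw [max_eq_left (by linarith), hexp, Real.div_rpow (by positivity) hx1.le,
      Real.mul_rpow zero_le_two h0.le, h2β]
    field_simp
  · have hx : 1 ≤ x := not_lt.1 fun h => h1 ⟨h0, h⟩
    rw [max_eq_right (by linarith), zero_mul, zero_mul]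

theorem integral_Ioo_rpow_mul_sub_div_nonneg (hβ0 : 0 < β) (hβ1 : β < 1) (hA : 0 < A) (hB : 0 ≤ B)
    (hAB : B * Real.sin (π * β / 2) ≤ A * Real.cos (π * β / 2)) :
    0 ≤ ∫ s in Ioo (0 : ℝ) 1, (1 - s) ^ (β - 1) *
      (2 * s * (A * (1 + s) - B * (c * (1 - s))) / ((1 + s) ^ 2 + (c * (1 - s)) ^ 2)) := by
  rcases le_or_gt (B * c) 0 with hBc | hBc
  · refine setIntegral_nonneg measurableSet_Ioo fun s ⟨h0, h1⟩ => ?_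
    have : 0 < 1 - s := sub_pos.2 h1
    have hnum : 0 ≤ A * (1 + s) - B * (c * (1 - s)) := by nlinarith
    positivity
  have hc : 0 < c := pos_of_mul_pos_right hBc hB
  have hcross : ∀ x ∈ Ioi (0 : ℝ),
      0 ≤ (A / (B * c) - x) * (x ^ (β - 1) * (A - B * (c * x)) / (1 + (c * x) ^ 2)) :=
    fun x (hx : 0 < x) => by
      have hlin : A - B * (c * x) = B * c * (A / (B * c) - x) := by
        rw [mul_sub, mul_div_cancel₀ _ hBc.ne', mul_assoc]
      rw [hlin, mul_div_assoc', mul_left_comm, mul_left_comm _ (B * c), ← pow_two]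
      positivity
  have hint := integrableOn_rpow_mul_sub_div_one_add_mul_sq (A := A) (B := B) hβ0 hβ1 hc
  have hγ : 0 ≤ 1 + β := by linarith
  have hWint : IntegrableOn (fun x : ℝ => max (1 - x) 0 * (1 + x) ^ (-(1 + β)) *
      (x ^ (β - 1) * (A - B * (c * x)) / (1 + (c * x) ^ 2))) (Ioi 0) :=
    hint.bdd_mul (c := 1) (Measurable.aestronglyMeasurable (by fun_prop))
      ((ae_restrict_iff' measurableSet_Ioi).2 (Eventually.of_forall
        fun x hx => norm_max_one_sub_mul_rpow_le hγ (mem_Ioi.1 hx).le))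
  rw [integral_Ioo_rpow_mul_sub_div_eq]
  refine mul_nonneg (by positivity) (le_trans (mul_nonneg (by positivity)
    (integral_rpow_mul_sub_div_one_add_mul_sq_nonneg hβ0 hβ1 hc hAB))
    (setIntegral_mul_ge_of_antitoneOn_of_crossing measurableSet_Ioi
      (a := A / (B * c)) (by exact div_pos hA hBc)
      (antitoneOn_max_one_sub_mul_rpow hγ) hcross hint hWint))

end Crossing

section CauchyKernel

variable {β : ℝ} {ζ : ℂ}

theorem integrableOn_Ioo_one_sub_rpow (hβ : 0 < β) :
    IntegrableOn (fun s : ℝ => (1 - s) ^ (β - 1)) (Ioo 0 1) := by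
  have h := (intervalIntegral.intervalIntegrable_rpow' (a := 0) (b := 1) (r := β - 1)
    (by linarith)).comp_sub_left 1
  simp only [sub_zero, sub_self] at h
  exact (intervalIntegrable_iff_integrableOn_Ioo_of_le zero_le_one).1 h.symm

theorem integral_Ioo_one_sub_rpow (hβ : 0 < β) :
    ∫ s in Ioo (0 : ℝ) 1, (1 - s) ^ (β - 1) = 1 / β := by
  rw [← integral_Ioc_eq_integral_Ioo, ← intervalIntegral.integral_of_le zero_le_one,
    intervalIntegral.integral_comp_sub_left (fun x : ℝ => x ^ (β - 1)),
    integral_rpow (Or.inl (by linarith)), sub_self, sub_zero, sub_add_cancel, Real.one_rpow,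
    Real.zero_rpow hβ.ne', sub_zero]

theorem norm_div_sub_le {z : ℂ} (hζ : ‖ζ‖ = 1) (hz : ‖z‖ < 1) :
    ‖ζ / (ζ - z)‖ ≤ (1 - ‖z‖)⁻¹ := by
  rw [norm_div, hζ, one_div]
  exact inv_anti₀ (sub_pos.2 hz) (hζ ▸ norm_sub_norm_le ζ z)

theorem exists_add_one_eq_I_mul_sub_one (hζ : ‖ζ‖ = 1) (hζ1 : ζ ≠ 1) :
    ∃ c : ℝ, ζ + 1 = Complex.I * c * (ζ - 1) := by
  have hsub : ζ - 1 ≠ 0 := sub_ne_zero.2 hζ1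
  have hζ0 : ζ ≠ 0 := norm_ne_zero_iff.1 (hζ ▸ one_ne_zero)
  have hconj : conj ((ζ + 1) / (ζ - 1)) = -((ζ + 1) / (ζ - 1)) := by
    have hsub' : 1 - ζ ≠ 0 := sub_ne_zero.2 hζ1.symm
    rw [map_div₀, map_add, map_sub, map_one, ← Complex.inv_eq_conj hζ]
    field_simp
    ring
  have hre : ((ζ + 1) / (ζ - 1)).re = 0 := by
    have h := congrArg Complex.re hconj
    rw [Complex.conj_re, Complex.neg_re] at h
    linarith
  refine ⟨((ζ + 1) / (ζ - 1)).im, ?_⟩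
  rw [← div_eq_iff hsub, mul_comm]
  refine Complex.ext ?_ ?_ <;> simp [hre]

theorem one_sub_mul_div_sub_eq {c s : ℝ} (hc : ζ + 1 = Complex.I * c * (ζ - 1)) (hζs : ζ ≠ s) :
    (1 - s) * (ζ / (ζ - s)) = 1 - 2 * s / (1 + s + Complex.I * c * (1 - s)) := by
  have hζs' : ζ - s ≠ 0 := sub_ne_zero.2 hζs
  have hw : 2 * (ζ - s) = (ζ - 1) * (1 + s + Complex.I * c * (1 - s)) := by
    linear_combination (1 - s : ℂ) * hc
  have hw0 : 1 + s + Complex.I * c * (1 - s) ≠ 0 :=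
    right_ne_zero_of_mul (hw ▸ mul_ne_zero two_ne_zero hζs')
  rw [mul_div_assoc', eq_sub_iff_add_eq, div_add_div _ _ hζs' hw0,
    div_eq_one_iff_eq (by positivity)]
  linear_combination (s : ℂ) * hw

theorem re_exp_mul_one_sub_mul_div_sub {c s t : ℝ} (hs : 0 < s)
    (hc : ζ + 1 = Complex.I * c * (ζ - 1)) (hζs : ζ ≠ s) :
    (Complex.exp (t * Complex.I) * ((1 - s) * (ζ / (ζ - s)))).re =
      Real.cos t + 2 * s * (-Real.cos t * (1 + s) - Real.sin t * (c * (1 - s))) /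
        ((1 + s) ^ 2 + (c * (1 - s)) ^ 2) := by
  have hw : (1 + s + Complex.I * c * (1 - s) : ℂ) = ⟨1 + s, c * (1 - s)⟩ := by
    refine Complex.ext ?_ ?_ <;> simp
  have : 0 < (1 + s) ^ 2 + (c * (1 - s)) ^ 2 := by positivity
  rw [one_sub_mul_div_sub_eq hc hζs, hw, Complex.exp_mul_I, ← Complex.ofReal_cos,
    ← Complex.ofReal_sin]
  simp only [Complex.mul_re, Complex.add_re, Complex.add_im, Complex.sub_re, Complex.sub_im,
    Complex.div_re, Complex.div_im, Complex.normSq_mk, Complex.mul_im, Complex.ofReal_re,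
    Complex.ofReal_im, Complex.I_re, Complex.I_im, Complex.one_re, Complex.one_im,
    Complex.re_ofNat, Complex.im_ofNat, ← pow_two]
  field_simp
  ring

theorem integrableOn_mul_rpow_mul_div_sub (hβ : 0 < β) (w : ℂ) (hζ : ‖ζ‖ = 1) :
    IntegrableOn (fun s : ℝ => w * ((1 - s) ^ β : ℝ) * (ζ / (ζ - s))) (Ioo 0 1) := by
  refine Integrable.mono' ((integrableOn_Ioo_one_sub_rpow hβ).const_mul ‖w‖)
    (Measurable.aestronglyMeasurable (by fun_prop)) ?_
  refine (ae_restrict_iff' measurableSet_Ioo).2 (Eventually.of_forall fun s ⟨hs0, hs1⟩ => ?_)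
  have hs : 0 < 1 - s := sub_pos.2 hs1
  have hnorm : ‖(s : ℂ)‖ = s := Complex.norm_of_nonneg hs0.le
  rw [norm_mul, norm_mul, mul_assoc, Complex.norm_of_nonneg (by positivity),
    Real.rpow_sub_one hs.ne', div_eq_mul_inv ((1 - s) ^ β)]
  gcongr
  simpa only [hnorm] using norm_div_sub_le hζ (hnorm.trans_lt hs1)

theorem re_mul_rpow_mul_div_sub {s : ℝ} (w : ℂ) (hs : s < 1) :
    (w * ((1 - s) ^ β : ℝ) * (ζ / (ζ - s))).re =
      (1 - s) ^ (β - 1) * (w * ((1 - s) * (ζ / (ζ - s)))).re := by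
  have hs1 : (1 - s) ^ β = (1 - s) ^ (β - 1) * (1 - s) := by
    rw [← Real.rpow_add_one (sub_pos.2 hs).ne', sub_add_cancel]
  rw [← Complex.re_ofReal_mul, hs1]
  push_cast
  ring_nf

theorem integral_re_mul_div_sub_sub_cos_nonneg {t : ℝ} (hβ0 : 0 < β) (hβ1 : β < 1)
    (hcos : Real.cos t < 0) (hsin : 0 ≤ Real.sin t)
    (hsector : Real.cos (t - π * β / 2) ≤ 0) (hζ : ‖ζ‖ = 1) :
    0 ≤ ∫ s in Ioo (0 : ℝ) 1, ((Complex.exp (t * Complex.I) * ((1 - s) ^ β : ℝ) *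
      (ζ / (ζ - s))).re - Real.cos t * (1 - s) ^ (β - 1)) := by
  rcases eq_or_ne ζ 1 with rfl | hζ1
  · refine setIntegral_nonneg measurableSet_Ioo fun s ⟨_, hs1⟩ => ?_
    have hs : (1 - s : ℂ) ≠ 0 := by exact_mod_cast (sub_pos.2 hs1).ne'
    rw [re_mul_rpow_mul_div_sub _ hs1, mul_one_div_cancel hs, mul_one, Complex.exp_ofReal_mul_I_re,
      mul_comm, sub_self]
  · obtain ⟨c, hc⟩ := exists_add_one_eq_I_mul_sub_one hζ hζ1
    rw [Real.cos_sub] at hsector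
    refine (integral_Ioo_rpow_mul_sub_div_nonneg (c := c) hβ0 hβ1 (neg_pos.2 hcos) hsin
      (by linarith)).trans_eq (setIntegral_congr_fun measurableSet_Ioo fun s ⟨hs0, hs1⟩ => ?_)
    have hζs : ζ ≠ s := by
      rintro rfl
      rw [Complex.norm_of_nonneg hs0.le] at hζ
      exact hs1.ne hζ
    simp only [re_mul_rpow_mul_div_sub _ hs1, re_exp_mul_one_sub_mul_div_sub hs0 hc hζs]
    ring

theorem cos_div_le_re_integral_mul_div_sub {t : ℝ} (hβ0 : 0 < β) (hβ1 : β < 1)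
    (ht0 : π / 2 + π * β / 2 ≤ t) (ht1 : t ≤ π) (hζ : ‖ζ‖ = 1) :
    Real.cos t / β ≤ (∫ s in Ioo (0 : ℝ) 1,
      Complex.exp (t * Complex.I) * ((1 - s) ^ β : ℝ) * (ζ / (ζ - s))).re := by
  have hpos : 0 < π * β / 2 := by positivity
  have hint := integrableOn_mul_rpow_mul_div_sub hβ0 (Complex.exp (t * Complex.I)) hζ
  have hre : IntegrableOn (fun s : ℝ => (Complex.exp (t * Complex.I) * ((1 - s) ^ β : ℝ) *
    (ζ / (ζ - s))).re) (Ioo 0 1) := hint.re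
  have hnonneg := integral_re_mul_div_sub_sub_cos_nonneg hβ0 hβ1
    (Real.cos_neg_of_pi_div_two_lt_of_lt (by linarith) (by linarith))
    (Real.sin_nonneg_of_nonneg_of_le_pi (by linarith) ht1)
    (Real.cos_nonpos_of_pi_div_two_le_of_le (by linarith) (by linarith)) hζ
  rw [integral_sub hre ((integrableOn_Ioo_one_sub_rpow hβ0).const_mul _), integral_const_mul,
    integral_Ioo_one_sub_rpow hβ0, mul_one_div, sub_nonneg] at hnonneg
  exact hnonneg.trans_eq (integral_re hint)

end CauchyKernel

section Schwarz

variable {f : ℂ → ℂ} {c w : ℂ} {R : ℝ}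

theorem sub_ne_zero_of_mem_sphere_of_mem_ball {ζ : ℂ} (hζ : ζ ∈ Metric.sphere c R)
    (hw : w ∈ Metric.ball c R) : ζ - w ≠ 0 :=
  sub_ne_zero.2 (ne_of_mem_of_not_mem hζ fun h => (Metric.mem_ball.1 hw).ne h)

theorem continuousOn_sub_div_sub (hw : w ∈ Metric.ball c R) :
    ContinuousOn (fun ζ => (ζ - c) / (ζ - w)) (Metric.sphere c R) :=
  ContinuousOn.div (by fun_prop) (by fun_prop) fun _ hζ =>
    sub_ne_zero_of_mem_sphere_of_mem_ball hζ hw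

theorem sub_div_sub_add_conj_eq (hw : w ∈ Metric.ball c R) {ζ : ℂ} (hζ : ζ ∈ Metric.sphere c R) :
    (ζ - c) / (ζ - w) + conj ((ζ - c) / (ζ - w)) = 1 + (herglotzRieszKernel c w ζ).re := by
  have hne : ζ - w ≠ 0 := sub_ne_zero_of_mem_sphere_of_mem_ball hζ hw
  have hker : herglotzRieszKernel c w ζ = 2 * ((ζ - c) / (ζ - w)) - 1 := by
    rw [herglotzRieszKernel_def, sub_sub_sub_cancel_right]
    field_simp
    ring
  rw [Complex.add_conj, hker]
  simp

theorem circleAverage_conj_sub_div_sub_smul (hf : DiffContOnCl ℂ f (Metric.ball c R))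
    (hw : w ∈ Metric.ball c R) :
    Real.circleAverage (fun ζ => conj ((ζ - c) / (ζ - w)) • f ζ) c R = f c := by
  have hR : 0 < R := Metric.pos_of_mem_ball hw
  have hf' : DiffContOnCl ℂ f (Metric.ball c |R|) := by rwa [abs_of_pos hR]
  have hw' : w ∈ Metric.ball c |R| := by rwa [abs_of_pos hR]
  have hcont : ContinuousOn f (Metric.sphere c R) :=
    hf.continuousOn_ball.mono Metric.sphere_subset_closedBall
  have hint : CircleIntegrable f c R := hcont.circleIntegrable hR.le
  have hintPoisson : CircleIntegrable ((Complex.re ∘ herglotzRieszKernel c w) • f) c R :=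
    hint.continuousOn_smul <|
      Complex.continuous_re.comp_continuousOn (continuousOn_herglotzRieszKernel_sphere hw)
  have hintCauchy : CircleIntegrable (fun ζ => ((ζ - c) / (ζ - w)) • f ζ) c R :=
    ((continuousOn_sub_div_sub hw).smul hcont).circleIntegrable hR.le
  calc Real.circleAverage (fun ζ => conj ((ζ - c) / (ζ - w)) • f ζ) c R
      = Real.circleAverage (f + (Complex.re ∘ herglotzRieszKernel c w) • f -
          fun ζ => ((ζ - c) / (ζ - w)) • f ζ) c R :=
        Real.circleAverage_congr_sphere fun ζ hζ => by
          rw [abs_of_pos hR] at hζ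
          simp only [Pi.sub_apply, Pi.add_apply, Pi.smul_apply', Function.comp_apply, smul_eq_mul,
            Complex.real_smul]
          linear_combination f ζ * sub_div_sub_add_conj_eq hw hζ
    _ = f c + f w - f w := by
        rw [Real.circleAverage_sub (hint.add hintPoisson) hintCauchy,
          Real.circleAverage_add hint hintPoisson, hf'.circleAverage,
          hf.circleAverage_re_herglotzRieszKernel_smul hw, hf'.circleAverage_smul_div hw']
    _ = f c := add_sub_cancel_right _ _

theorem circleAverage_sub_div_sub_mul_conj (hf : DiffContOnCl ℂ f (Metric.ball c R))
    (hw : w ∈ Metric.ball c R) :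
    Real.circleAverage (fun ζ => (ζ - c) / (ζ - w) * conj (f ζ)) c R = conj (f c) := by
  have hcont : ContinuousOn f (Metric.sphere c R) :=
    hf.continuousOn_ball.mono Metric.sphere_subset_closedBall
  have hint : CircleIntegrable (fun ζ => conj ((ζ - c) / (ζ - w)) • f ζ) c R :=
    ((Complex.continuous_conj.comp_continuousOn (continuousOn_sub_div_sub hw)).smul
      hcont).circleIntegrable (Metric.pos_of_mem_ball hw).le
  have h := Complex.conjCLE.toContinuousLinearMap.circleAverage_comp_comm hint
  rw [circleAverage_conj_sub_div_sub_smul hf hw] at h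
  refine Eq.trans (congrArg (Real.circleAverage · c R) (funext fun ζ => ?_)) h
  simp

theorem circleAverage_two_mul_re_mul_sub_div_sub (hf : DiffContOnCl ℂ f (Metric.ball c R))
    (hw : w ∈ Metric.ball c R) :
    Real.circleAverage (fun ζ => (2 * (f ζ).re : ℝ) * ((ζ - c) / (ζ - w))) c R =
      f w + conj (f c) := by
  have hR : 0 < R := Metric.pos_of_mem_ball hw
  have hf' : DiffContOnCl ℂ f (Metric.ball c |R|) := by rwa [abs_of_pos hR]
  have hw' : w ∈ Metric.ball c |R| := by rwa [abs_of_pos hR]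
  have hcont : ContinuousOn f (Metric.sphere c R) :=
    hf.continuousOn_ball.mono Metric.sphere_subset_closedBall
  have hint : CircleIntegrable (fun ζ => ((ζ - c) / (ζ - w)) • f ζ) c R :=
    ((continuousOn_sub_div_sub hw).smul hcont).circleIntegrable hR.le
  have hintConj : CircleIntegrable (fun ζ => (ζ - c) / (ζ - w) * conj (f ζ)) c R :=
    ((continuousOn_sub_div_sub hw).mul
      (Complex.continuous_conj.comp_continuousOn hcont)).circleIntegrable hR.le
  rw [← hf'.circleAverage_smul_div hw', ← circleAverage_sub_div_sub_mul_conj hf hw,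
    ← Real.circleAverage_fun_add hint hintConj]
  refine congrArg (Real.circleAverage · c R) (funext fun ζ => ?_)
  rw [← Complex.add_conj, smul_eq_mul]
  ring

theorem circleAverage_two_mul_re_sub_one_mul_div_sub {Ψ : ℂ → ℂ}
    (hΨ : DiffContOnCl ℂ Ψ (Metric.ball 0 1)) (hΨ0 : Ψ 0 = 1) (hw : ‖w‖ < 1) :
    Real.circleAverage (fun ζ => (2 * (Ψ ζ).re - 1 : ℝ) * (ζ / (ζ - w))) 0 1 = Ψ w := by
  have h := circleAverage_two_mul_re_mul_sub_div_sub (hΨ.sub_const (1 / 2))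
    (mem_ball_zero_iff.2 hw)
  have hconj : conj (1 / 2 : ℂ) = 1 / 2 := by
    rw [map_div₀, map_one, Complex.conj_ofNat]
  have hre : ∀ ζ, 2 * (Ψ ζ - 1 / 2).re = 2 * (Ψ ζ).re - 1 := fun ζ => by simp; ring
  simp only [hre, sub_zero, hΨ0, map_sub, map_one, hconj] at h
  rw [h]
  ring

theorem circleAverage_two_mul_re_sub_one {Ψ : ℂ → ℂ}
    (hΨ : DiffContOnCl ℂ Ψ (Metric.ball 0 1)) (hΨ0 : Ψ 0 = 1) :
    Real.circleAverage (fun ζ => 2 * (Ψ ζ).re - 1) 0 1 = 1 := by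
  have hd : DiffContOnCl ℂ (fun ζ => (2 : ℂ) • Ψ ζ - 1) (Metric.ball 0 1) :=
    (hΨ.const_smul (2 : ℂ)).sub_const 1
  have hint : CircleIntegrable (fun ζ => (2 : ℂ) • Ψ ζ - 1) 0 1 :=
    (hd.continuousOn_ball.mono Metric.sphere_subset_closedBall).circleIntegrable zero_le_one
  have h := Complex.reCLM.circleAverage_comp_comm hint
  rw [DiffContOnCl.circleAverage (by rwa [abs_one]), hΨ0] at h
  simpa [Function.comp_def, show (2 : ℝ) - 1 = 1 by norm_num] using h

end Schwarz

section Averaging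

variable {X : Type*} [MeasurableSpace X] {μ : Measure X} {g p : X → ℂ}

theorem integral_circleAverage_comm [SFinite μ] {E : Type*} [NormedAddCommGroup E]
    [NormedSpace ℝ E] {F : X → ℂ → E} {c : ℂ} {R : ℝ}
    (hF : Integrable (fun q : X × ℝ => F q.1 (circleMap c R q.2))
      (μ.prod (volume.restrict (Ioc 0 (2 * π))))) :
    ∫ x, Real.circleAverage (F x) c R ∂μ =
      Real.circleAverage (fun ζ => ∫ x, F x ζ ∂μ) c R := by
  simp only [Real.circleAverage_def, intervalIntegral.integral_of_le Real.two_pi_pos.le]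
  rw [integral_smul, integral_integral_swap hF]

theorem integrable_prod_mul_circleMap_div_sub [SFinite μ] {ρ : ℂ → ℝ}
    (hρ : CircleIntegrable ρ 0 1) (hp : Measurable p) (hp1 : ∀ᵐ x ∂μ, ‖p x‖ < 1)
    (hg : Integrable (fun x => g x * ((1 - ‖p x‖ : ℝ)⁻¹ : ℝ)) μ) :
    Integrable (fun q : X × ℝ => g q.1 * (ρ (circleMap 0 1 q.2) *
      (circleMap 0 1 q.2 / (circleMap 0 1 q.2 - p q.1))))
      (μ.prod (volume.restrict (Ioc 0 (2 * π)))) := by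
  have hρ' : Integrable (fun θ => (ρ (circleMap 0 1 θ) : ℂ)) (volume.restrict (Ioc 0 (2 * π))) :=
    ((intervalIntegrable_iff_integrableOn_Ioc_of_le Real.two_pi_pos.le).1 hρ).ofReal
  have : Measurable (circleMap 0 1) := (continuous_circleMap 0 1).measurable
  have hbdd : ∀ᵐ q : X × ℝ ∂μ.prod (volume.restrict (Ioc 0 (2 * π))),
      ‖((1 - ‖p q.1‖ : ℝ) : ℂ) * (circleMap 0 1 q.2 / (circleMap 0 1 q.2 - p q.1))‖ ≤ 1 := by
    filter_upwards [Measure.quasiMeasurePreserving_fst.ae hp1] with q hq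
    have hpos : 0 < 1 - ‖p q.1‖ := sub_pos.2 hq
    rw [norm_mul, Complex.norm_of_nonneg hpos.le, ← le_inv_mul_iff₀ hpos, mul_one]
    exact norm_div_sub_le ((norm_circleMap_zero 1 q.2).trans abs_one) hq
  refine ((hg.mul_prod hρ').bdd_mul (c := 1) ?_ hbdd).congr ?_
  · exact Measurable.aestronglyMeasurable (by fun_prop)
  · filter_upwards [Measure.quasiMeasurePreserving_fst.ae hp1] with q hq
    have hpos : ((1 - ‖p q.1‖ : ℝ) : ℂ) ≠ 0 := Complex.ofReal_ne_zero.2 (sub_pos.2 hq).ne'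
    push_cast at hpos ⊢
    field_simp

theorem circleIntegrable_two_mul_re_sub_one {Ψ : ℂ → ℂ}
    (hΨ : DiffContOnCl ℂ Ψ (Metric.ball 0 1)) :
    CircleIntegrable (fun ζ => 2 * (Ψ ζ).re - 1) 0 1 := by
  have hcont : ContinuousOn Ψ (Metric.sphere 0 1) :=
    hΨ.continuousOn_ball.mono Metric.sphere_subset_closedBall
  exact ContinuousOn.circleIntegrable zero_le_one (by fun_prop)

theorem integral_mul_comp_eq_circleAverage [SFinite μ] {Ψ : ℂ → ℂ}
    (hp : Measurable p) (hp1 : ∀ᵐ x ∂μ, ‖p x‖ < 1)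
    (hg : Integrable (fun x => g x * ((1 - ‖p x‖ : ℝ)⁻¹ : ℝ)) μ)
    (hΨ : DiffContOnCl ℂ Ψ (Metric.ball 0 1)) (hΨ0 : Ψ 0 = 1) :
    ∫ x, g x * Ψ (p x) ∂μ = Real.circleAverage
      (fun ζ => ∫ x, g x * ((2 * (Ψ ζ).re - 1 : ℝ) * (ζ / (ζ - p x))) ∂μ) 0 1 := by
  rw [← integral_circleAverage_comm
    (integrable_prod_mul_circleMap_div_sub (circleIntegrable_two_mul_re_sub_one hΨ) hp hp1 hg)]
  refine integral_congr_ae ?_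
  filter_upwards [hp1] with x hx
  rw [← circleAverage_two_mul_re_sub_one_mul_div_sub hΨ hΨ0 hx, ← smul_eq_mul,
    ← Real.circleAverage_fun_smul]
  rfl

theorem le_re_integral_mul_comp_of_half_le_re_sphere [SFinite μ] {Ψ : ℂ → ℂ} {m : ℝ}
    (hp : Measurable p) (hp1 : ∀ᵐ x ∂μ, ‖p x‖ < 1)
    (hg : Integrable (fun x => g x * ((1 - ‖p x‖ : ℝ)⁻¹ : ℝ)) μ)
    (hm : ∀ ζ : ℂ, ‖ζ‖ = 1 → m ≤ (∫ x, g x * (ζ / (ζ - p x)) ∂μ).re)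
    (hΨ : DiffContOnCl ℂ Ψ (Metric.ball 0 1)) (hΨ0 : Ψ 0 = 1)
    (hre : ∀ ζ : ℂ, ‖ζ‖ = 1 → 1 / 2 ≤ (Ψ ζ).re) :
    m ≤ (∫ x, g x * Ψ (p x) ∂μ).re := by
  set φ : ℂ → ℂ := fun ζ => ∫ x, g x * ((2 * (Ψ ζ).re - 1 : ℝ) * (ζ / (ζ - p x))) ∂μ
  have hρ := circleIntegrable_two_mul_re_sub_one hΨ
  have hφ : IntervalIntegrable (fun θ => φ (circleMap 0 1 θ)) volume 0 (2 * π) :=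
    (intervalIntegrable_iff_integrableOn_Ioc_of_le Real.two_pi_pos.le).2
      (integrable_prod_mul_circleMap_div_sub hρ hp hp1 hg).integral_prod_right
  have hφre : CircleIntegrable (Complex.reCLM ∘ φ) 0 1 :=
    ⟨Complex.reCLM.integrable_comp hφ.1, Complex.reCLM.integrable_comp hφ.2⟩
  have hle : ∀ ζ ∈ Metric.sphere (0 : ℂ) |1|, m * (2 * (Ψ ζ).re - 1) ≤ (φ ζ).re := fun ζ hζ => by
    rw [abs_one, mem_sphere_zero_iff_norm] at hζ
    simp only [φ, mul_left_comm (g _), integral_const_mul, Complex.re_ofReal_mul]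
    rw [mul_comm]
    exact mul_le_mul_of_nonneg_left (hm ζ hζ) (by linarith [hre ζ hζ])
  calc m = Real.circleAverage (fun ζ => m * (2 * (Ψ ζ).re - 1)) 0 1 := by
        simp only [← smul_eq_mul m]
        rw [Real.circleAverage_fun_smul, circleAverage_two_mul_re_sub_one hΨ hΨ0, smul_eq_mul,
          mul_one]
    _ ≤ Real.circleAverage (Complex.reCLM ∘ φ) 0 1 :=
        Real.circleAverage_mono (hρ.const_smul (a := m)) hφre hle
    _ = (∫ x, g x * Ψ (p x) ∂μ).re := by
        rw [Complex.reCLM.circleAverage_comp_comm hφ,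
          integral_mul_comp_eq_circleAverage hp hp1 hg hΨ hΨ0, Complex.reCLM_apply]

end Averaging

section HalfPlane

/-- The class of holomorphic functions on the unit disk, normalized by `Ψ 0 = 1`, whose real part
exceeds `γ`. For `γ = 0` this is the Carathéodory class, and for `γ = 1 / 2` its elements are the
averages of the functions `z ↦ ζ / (ζ - z)` with `‖ζ‖ = 1`. -/
structure IsCaratheodoryOfOrder (γ : ℝ) (Ψ : ℂ → ℂ) : Prop where
  differentiableOn : DifferentiableOn ℂ Ψ (Metric.ball 0 1)
  map_zero : Ψ 0 = 1
  lt_re : ∀ z : ℂ, ‖z‖ < 1 → γ < (Ψ z).re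

theorem half_lt_re_inv_iff {v : ℂ} (hv : v ≠ 0) : 1 / 2 < (v⁻¹).re ↔ ‖1 - v‖ < 1 := by
  have hsq : ‖1 - v‖ ^ 2 = 1 - 2 * v.re + Complex.normSq v := by
    rw [← Complex.normSq_eq_norm_sq, Complex.normSq_sub, Complex.normSq_one, one_mul,
      Complex.conj_re]
    ring
  rw [Complex.inv_re, lt_div_iff₀ (Complex.normSq_pos.2 hv), ← sq_lt_one_iff₀ (norm_nonneg _), hsq]
  constructor <;> intro h <;> linarith

variable {Ψ : ℂ → ℂ}

theorem IsCaratheodoryOfOrder.ne_zero {γ : ℝ} (hγ : 0 ≤ γ) (hΨ : IsCaratheodoryOfOrder γ Ψ) {z : ℂ}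
    (hz : ‖z‖ < 1) : Ψ z ≠ 0 := fun h => by
  have := hΨ.lt_re z hz
  rw [h, Complex.zero_re] at this
  linarith

theorem IsCaratheodoryOfOrder.norm_le (hΨ : IsCaratheodoryOfOrder (1 / 2) Ψ) {z : ℂ}
    (hz : ‖z‖ < 1) : ‖Ψ z‖ ≤ (1 - ‖z‖)⁻¹ := by
  have hne : ∀ z ∈ Metric.ball (0 : ℂ) 1, Ψ z ≠ 0 := fun z hz =>
    hΨ.ne_zero (by norm_num) (mem_ball_zero_iff.1 hz)
  have hschwarz : ‖1 - (Ψ z)⁻¹‖ ≤ ‖z‖ := by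
    refine Complex.norm_le_norm_of_mapsTo_ball (f := fun z => 1 - (Ψ z)⁻¹) (R := 1)
      ((hΨ.differentiableOn.inv hne).const_sub 1) (fun z hz => ?_) (by simp [hΨ.map_zero]) hz
    have hpos := hΨ.lt_re z (mem_ball_zero_iff.1 hz)
    rw [mem_closedBall_zero_iff]
    exact ((half_lt_re_inv_iff (inv_ne_zero (hne z hz))).1 (by rwa [inv_inv])).le
  have hinv : 1 - ‖z‖ ≤ ‖Ψ z‖⁻¹ := by
    have h := norm_sub_norm_le 1 (1 - (Ψ z)⁻¹)
    rw [sub_sub_cancel, norm_one, norm_inv] at h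
    linarith
  exact (le_inv_comm₀ (sub_pos.2 hz) (norm_pos_iff.2 (hne z (mem_ball_zero_iff.2 hz)))).1 hinv

theorem aestronglyMeasurable_comp_of_continuousOn {X Y Z : Type*} [MeasurableSpace X]
    [TopologicalSpace Y] [MeasurableSpace Y] [OpensMeasurableSpace Y] [TopologicalSpace Z]
    [TopologicalSpace.PseudoMetrizableSpace Z] [SecondCountableTopologyEither Y Z] {μ : Measure X}
    {f : Y → Z} {q : X → Y} {s : Set Y} (hf : ContinuousOn f s) (hs : MeasurableSet s)
    (hq : Measurable q) (hqs : ∀ᵐ x ∂μ, q x ∈ s) :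
    AEStronglyMeasurable (fun x => f (q x)) μ := by
  refine AEStronglyMeasurable.comp_measurable (g := f) ?_ hq
  rw [← Measure.restrict_eq_self_of_ae_mem ((ae_map_iff hq.aemeasurable hs).2 hqs)]
  exact hf.aestronglyMeasurable hs

theorem norm_ofReal_mul_le {r : ℝ} (hr : r ∈ Ioo 0 1) (z : ℂ) : ‖(r : ℂ) * z‖ ≤ ‖z‖ := by
  rw [norm_mul, Complex.norm_of_nonneg hr.1.le]
  exact mul_le_of_le_one_left (norm_nonneg z) hr.2.le

theorem norm_mul_lt_one {c z : ℂ} (hc : ‖c‖ < 1) (hz : ‖z‖ ≤ 1) : ‖c * z‖ < 1 := by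
  rw [norm_mul]
  exact mul_lt_one_of_nonneg_of_lt_one_left (norm_nonneg c) hc hz

theorem diffContOnCl_comp_mul {h : ℂ → ℂ} (hh : DifferentiableOn ℂ h (Metric.ball 0 1)) {c : ℂ}
    (hc : ‖c‖ < 1) : DiffContOnCl ℂ (fun z => h (c * z)) (Metric.ball 0 1) := by
  refine DifferentiableOn.diffContOnCl ?_
  rw [closure_ball 0 one_ne_zero]
  exact hh.comp (by fun_prop) fun z hz =>
    mem_ball_zero_iff.2 (norm_mul_lt_one hc (mem_closedBall_zero_iff.1 hz))

variable {X : Type*} [MeasurableSpace X] {μ : Measure X} {g p : X → ℂ}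

theorem IsCaratheodoryOfOrder.tendsto_integral_mul_comp_ofReal_mul
    (hΨ : IsCaratheodoryOfOrder (1 / 2) Ψ) (hp : Measurable p) (hp1 : ∀ᵐ x ∂μ, ‖p x‖ < 1)
    (hg : AEStronglyMeasurable g μ)
    (hgp : Integrable (fun x => g x * ((1 - ‖p x‖ : ℝ)⁻¹ : ℝ)) μ) :
    Tendsto (fun r : ℝ => ∫ x, g x * Ψ (r * p x) ∂μ) (𝓝[<] 1)
      (𝓝 (∫ x, g x * Ψ (p x) ∂μ)) := by
  refine tendsto_integral_filter_of_dominated_convergence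
    (fun x => ‖g x * ((1 - ‖p x‖ : ℝ)⁻¹ : ℝ)‖) ?_ ?_ hgp.norm ?_
  · filter_upwards [Ioo_mem_nhdsLT zero_lt_one] with r hr
    refine hg.mul (aestronglyMeasurable_comp_of_continuousOn hΨ.differentiableOn.continuousOn
      Metric.isOpen_ball.measurableSet (by fun_prop) ?_)
    filter_upwards [hp1] with x hx
    exact mem_ball_zero_iff.2 ((norm_ofReal_mul_le hr _).trans_lt hx)
  · filter_upwards [Ioo_mem_nhdsLT zero_lt_one] with r hr
    filter_upwards [hp1] with x hx
    have hle := norm_ofReal_mul_le hr (p x)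
    rw [norm_mul, norm_mul, Complex.norm_of_nonneg (inv_nonneg.2 (sub_pos.2 hx).le)]
    gcongr
    exact (hΨ.norm_le (hle.trans_lt hx)).trans
      (inv_anti₀ (sub_pos.2 hx) (sub_le_sub_left hle 1))
  · filter_upwards [hp1] with x hx
    have hΨx : ContinuousAt Ψ (p x) := hΨ.differentiableOn.continuousOn.continuousAt
      (Metric.isOpen_ball.mem_nhds (mem_ball_zero_iff.2 hx))
    have hrx : Tendsto (fun r : ℝ => (r : ℂ) * p x) (𝓝[<] 1) (𝓝 (p x)) :=
      (Continuous.tendsto' (by fun_prop) 1 _ (by simp)).mono_left nhdsWithin_le_nhds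
    exact (hΨx.tendsto.comp hrx).const_mul (g x)

theorem IsCaratheodoryOfOrder.le_re_integral_mul_comp [SFinite μ] {m : ℝ}
    (hΨ : IsCaratheodoryOfOrder (1 / 2) Ψ) (hp : Measurable p) (hp1 : ∀ᵐ x ∂μ, ‖p x‖ < 1)
    (hg : AEStronglyMeasurable g μ)
    (hgp : Integrable (fun x => g x * ((1 - ‖p x‖ : ℝ)⁻¹ : ℝ)) μ)
    (hm : ∀ ζ : ℂ, ‖ζ‖ = 1 → m ≤ (∫ x, g x * (ζ / (ζ - p x)) ∂μ).re) :
    m ≤ (∫ x, g x * Ψ (p x) ∂μ).re := by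
  refine ge_of_tendsto ((Complex.continuous_re.tendsto _).comp
    (hΨ.tendsto_integral_mul_comp_ofReal_mul hp hp1 hg hgp)) ?_
  filter_upwards [Ioo_mem_nhdsLT zero_lt_one] with r hr
  have hr1 : ‖(r : ℂ)‖ < 1 := by rw [Complex.norm_of_nonneg hr.1.le]; exact hr.2
  exact le_re_integral_mul_comp_of_half_le_re_sphere (Ψ := fun z => Ψ (r * z)) hp hp1 hgp hm
    (diffContOnCl_comp_mul hΨ.differentiableOn hr1) (by simp only [mul_zero, hΨ.map_zero])
    fun ζ hζ => (hΨ.lt_re _ (norm_mul_lt_one hr1 hζ.le)).le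

end HalfPlane

section Jack

theorem eq_norm_of_re_mul_le {q : ℂ} (h : ∀ u : ℂ, ‖u‖ ≤ 1 → (q * u).re ≤ q.re) : q = ‖q‖ := by
  rcases eq_or_ne q 0 with rfl | hq
  · rw [norm_zero, Complex.ofReal_zero]
  have hnorm : (‖q‖ : ℂ) ≠ 0 := Complex.ofReal_ne_zero.2 (norm_ne_zero_iff.2 hq)
  have hle := h (conj q / ‖q‖) (by
    rw [norm_div, Complex.norm_conj, Complex.norm_real, norm_norm]
    exact div_self_le_one _)
  rw [← mul_div_assoc, Complex.mul_conj', sq, mul_div_cancel_right₀ _ hnorm,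
    Complex.ofReal_re] at hle
  exact Complex.eq_coe_norm_of_nonneg (Complex.re_eq_norm.1 ((Complex.re_le_norm q).antisymm hle))

theorem re_mul_deriv_mul_conj_mul_le_of_isMaxOn {φ : ℂ → ℂ} {z : ℂ}
    (hφ : DifferentiableAt ℂ φ z)
    (hmax : IsMaxOn (norm ∘ φ) (Metric.closedBall 0 ‖z‖) z) {u : ℂ} (hu : ‖u‖ ≤ 1) :
    (z * deriv φ z * conj (φ z) * u).re ≤ (z * deriv φ z * conj (φ z)).re := by
  have huz : u * z ∈ Metric.closedBall 0 ‖z‖ := by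
    rw [mem_closedBall_zero_iff, norm_mul]
    exact mul_le_of_le_one_left (norm_nonneg z) hu
  have hsegment := (convex_closedBall (0 : ℂ) ‖z‖).segment_subset
    (mem_closedBall_zero_iff.2 le_rfl) huz
  have hmaxsq : IsMaxOn (fun y => ‖φ y‖ ^ 2) (Metric.closedBall 0 ‖z‖) z := fun y hy =>
    pow_le_pow_left₀ (norm_nonneg _) (hmax hy) 2
  have hnonpos := hmaxsq.localize.hasFDerivWithinAt_nonpos
    (hφ.hasDerivAt.hasFDerivAt.restrictScalars ℝ).norm_sq.hasFDerivWithinAt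
    (sub_mem_posTangentConeAt_of_segment_subset hsegment)
  have heq : (u * z - z) * deriv φ z * conj (φ z) =
      z * deriv φ z * conj (φ z) * u - z * deriv φ z * conj (φ z) := by ring
  have hinner : 2 • ((u * z - z) * deriv φ z * conj (φ z)).re ≤ 0 := hnonpos
  rw [heq, Complex.sub_re, two_nsmul] at hinner
  linarith

theorem exists_nonneg_mul_deriv_eq_of_isMaxOn {φ : ℂ → ℂ} {z : ℂ} (hφ : DifferentiableAt ℂ φ z)
    (hmax : IsMaxOn (norm ∘ φ) (Metric.closedBall 0 ‖z‖) z) (hne : φ z ≠ 0) :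
    ∃ k : ℝ, 0 ≤ k ∧ z * deriv φ z = k * φ z := by
  have hq := eq_norm_of_re_mul_le fun u hu =>
    re_mul_deriv_mul_conj_mul_le_of_isMaxOn hφ hmax hu
  refine ⟨‖z * deriv φ z * conj (φ z)‖ / ‖φ z‖ ^ 2, by positivity, ?_⟩
  have hconj : conj (φ z) ≠ 0 := (map_ne_zero _).2 hne
  rw [Complex.ofReal_div, ← hq, Complex.ofReal_pow, ← Complex.mul_conj']
  field_simp

theorem exists_norm_eq_isMaxOn_norm_closedBall {φ : ℂ → ℂ} {R : ℝ}
    (hφ : DifferentiableOn ℂ φ (Metric.ball 0 R)) {z : ℂ} (hz0 : z ≠ 0) (hz : ‖z‖ < R) :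
    ∃ z₁ : ℂ, ‖z₁‖ = ‖z‖ ∧ IsMaxOn (norm ∘ φ) (Metric.closedBall 0 ‖z₁‖) z₁ := by
  have hz0' := norm_ne_zero_iff.2 hz0
  obtain ⟨z₁, hz₁, hmax⟩ := Complex.exists_mem_frontier_isMaxOn_norm
    (Metric.isBounded_ball (x := (0 : ℂ)) (r := ‖z‖)) (Metric.nonempty_ball.2 (norm_pos_iff.2 hz0))
    (hφ.diffContOnCl_ball (Metric.closedBall_subset_ball hz))
  rw [frontier_ball 0 hz0', mem_sphere_zero_iff_norm] at hz₁
  rw [closure_ball 0 hz0', ← hz₁] at hmax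
  exact ⟨z₁, hz₁, hmax⟩

/-- **Jack's lemma**. -/
theorem exists_one_le_mul_deriv_eq {w : ℂ → ℂ} {R : ℝ} (hw : DifferentiableOn ℂ w (Metric.ball 0 R))
    (hw0 : w 0 = 0) {z : ℂ} (hz : ‖z‖ < R) (hwz : w z ≠ 0) :
    ∃ z₁ : ℂ, ‖z₁‖ = ‖z‖ ∧ ‖w z‖ ≤ ‖w z₁‖ ∧ ∃ m : ℝ, 1 ≤ m ∧ z₁ * deriv w z₁ = m * w z₁ := by
  have hz0 : z ≠ 0 := fun h => hwz (by rw [h, hw0])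
  obtain ⟨φ, hφ, hw_eq⟩ : ∃ φ : ℂ → ℂ, DifferentiableOn ℂ φ (Metric.ball 0 R) ∧
      ∀ y, w y = y * φ y := by
    refine ⟨dslope w 0, (Complex.differentiableOn_dslope
      (Metric.ball_mem_nhds 0 ((norm_nonneg z).trans_lt hz))).2 hw, fun y => ?_⟩
    simpa only [sub_zero, hw0, smul_eq_mul] using (sub_smul_dslope w 0 y).symm
  obtain ⟨z₁, hz₁, hmax⟩ := exists_norm_eq_isMaxOn_norm_closedBall hφ hz0 hz
  have hle : ‖w z‖ ≤ ‖w z₁‖ := by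
    rw [hw_eq z, hw_eq z₁, norm_mul, norm_mul, hz₁]
    exact mul_le_mul_of_nonneg_left (hmax (mem_closedBall_zero_iff.2 hz₁.ge)) (norm_nonneg z)
  have hφ₁ : DifferentiableAt ℂ φ z₁ :=
    hφ.differentiableAt (Metric.isOpen_ball.mem_nhds (mem_ball_zero_iff.2 (hz₁.trans_lt hz)))
  have hne : φ z₁ ≠ 0 := fun h => by
    rw [hw_eq z₁, h, mul_zero, norm_zero, norm_le_zero_iff] at hle
    exact hwz hle
  obtain ⟨k, hk, hderiv⟩ := exists_nonneg_mul_deriv_eq_of_isMaxOn hφ₁ hmax hne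
  refine ⟨z₁, hz₁, hle, 1 + k, le_add_of_nonneg_right hk, ?_⟩
  rw [funext hw_eq, deriv_fun_mul differentiableAt_fun_id hφ₁, deriv_id'', one_mul, hderiv]
  push_cast
  ring

end Jack

section Subordination

theorem isCaratheodoryOfOrder_half_of_neg_half_lt_re {Ψ : ℂ → ℂ}
    (hΨ : DifferentiableOn ℂ Ψ (Metric.ball 0 1)) (hΨ0 : Ψ 0 = 1)
    (hne : ∀ z, ‖z‖ < 1 → Ψ z ≠ 0)
    (hre : ∀ z, ‖z‖ < 1 → -(1 / 2) < (z * logDeriv Ψ z).re) :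
    IsCaratheodoryOfOrder (1 / 2) Ψ := by
  have hhalf : ∀ {z}, ‖z‖ < 1 → (1 / 2 < (Ψ z).re ↔ ‖1 - (Ψ z)⁻¹‖ < 1) := fun hz => by
    rw [← half_lt_re_inv_iff (inv_ne_zero (hne _ hz)), inv_inv]
  refine ⟨hΨ, hΨ0, fun z hz => (hhalf hz).2 ?_⟩
  by_contra! hz1
  obtain ⟨z₁, hz₁, hle, m, hm, hjack⟩ := exists_one_le_mul_deriv_eq (w := fun z => 1 - (Ψ z)⁻¹)
    ((hΨ.inv fun z hz => hne z (mem_ball_zero_iff.1 hz)).const_sub 1) (by simp [hΨ0]) hz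
    (norm_pos_iff.1 (zero_lt_one.trans_le hz1))
  rw [← hz₁] at hz
  have hne₁ := hne z₁ hz
  have hlog : z₁ * logDeriv Ψ z₁ = m * (Ψ z₁ - 1) := by
    rw [deriv_const_sub, deriv_fun_inv'' (hΨ.differentiableAt
      (Metric.isOpen_ball.mem_nhds (mem_ball_zero_iff.2 hz))) hne₁] at hjack
    rw [logDeriv_apply]
    field_simp at hjack ⊢
    linear_combination hjack
  have hΨ₁ : (Ψ z₁).re ≤ 1 / 2 := not_lt.1 fun h => ((hhalf hz).1 h).not_ge (hz1.trans hle)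
  have hlt := hre z₁ hz
  rw [hlog, Complex.re_ofReal_mul, Complex.sub_re, Complex.one_re] at hlt
  nlinarith

theorem one_sub_mem_slitPlane {z : ℂ} (hz : ‖z‖ < 1) : 1 - z ∈ Complex.slitPlane := by
  rw [sub_eq_add_neg]
  exact Complex.mem_slitPlane_of_norm_lt_one (by rwa [norm_neg])

theorem hasDerivAt_one_sub_cpow (c : ℂ) {z : ℂ} (hz : ‖z‖ < 1) :
    HasDerivAt (fun z : ℂ => (1 - z) ^ c) (-(c * (1 - z) ^ (c - 1))) z := by
  simpa only [mul_neg_one, id_eq] using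
    ((hasDerivAt_id z).const_sub 1).cpow_const (one_sub_mem_slitPlane hz)

theorem one_sub_cpow_ne_zero (c : ℂ) {z : ℂ} (hz : ‖z‖ < 1) : (1 - z) ^ c ≠ 0 :=
  Complex.cpow_ne_zero_iff.2 (Or.inl (Complex.slitPlane_ne_zero (one_sub_mem_slitPlane hz)))

theorem mul_logDeriv_one_sub_cpow (c : ℂ) {z : ℂ} (hz : ‖z‖ < 1) :
    z * logDeriv (fun z : ℂ => (1 - z) ^ c) z = -(c * (z / (1 - z))) := by
  have hz1 : 1 - z ≠ 0 := Complex.slitPlane_ne_zero (one_sub_mem_slitPlane hz)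
  have hpow := one_sub_cpow_ne_zero c hz
  rw [logDeriv_apply, (hasDerivAt_one_sub_cpow c hz).deriv, Complex.cpow_sub _ _ hz1,
    Complex.cpow_one]
  field_simp

theorem neg_half_lt_re_div_one_sub {z : ℂ} (hz : ‖z‖ < 1) : -(1 / 2) < (z / (1 - z)).re := by
  have hz1 : 1 - z ≠ 0 := Complex.slitPlane_ne_zero (one_sub_mem_slitPlane hz)
  have hhalf : 1 / 2 < ((1 - z)⁻¹).re := (half_lt_re_inv_iff hz1).2 (by rwa [sub_sub_cancel])
  have heq : z / (1 - z) = (1 - z)⁻¹ - 1 := by field_simp; ring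
  rw [heq, Complex.sub_re, Complex.one_re]
  linarith

end Subordination

section Convex

variable {α : ℝ} {f : ℂ → ℂ}

theorem IsConvexOfOrder.sub_one_lt_re_mul_logDeriv_deriv (hf : IsConvexOfOrder α f) {z : ℂ}
    (hz : ‖z‖ < 1) : α - 1 < (z * logDeriv (deriv f) z).re := by
  have h := (hf.2.2.2 z (mem_ball_zero_iff.2 hz)).2
  rw [Complex.add_re, Complex.one_re, mul_div_assoc] at h
  rw [logDeriv_apply]
  linarith

theorem IsConvexOfOrder.isCaratheodoryOfOrder (hf : IsConvexOfOrder α f) (hα : 1 / 2 ≤ α)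
    {z₀ : ℂ} (hz₀ : ‖z₀‖ < 1) :
    IsCaratheodoryOfOrder (1 / 2)
      (fun z => deriv f (z₀ * z) / (1 - z) ^ ((2 * α - 1 : ℝ) : ℂ)) := by
  have hmul : ∀ {z : ℂ}, ‖z‖ < 1 → ‖z₀ * z‖ < 1 := fun hz => norm_mul_lt_one hz₀ hz.le
  have hf' : ∀ {z : ℂ}, ‖z‖ < 1 → DifferentiableAt ℂ (deriv f) z := fun hz =>
    (hf.1.deriv Metric.isOpen_ball).differentiableAt
      (Metric.isOpen_ball.mem_nhds (mem_ball_zero_iff.2 hz))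
  have hne : ∀ {z : ℂ}, ‖z‖ < 1 → deriv f z ≠ 0 := fun hz =>
    (hf.2.2.2 _ (mem_ball_zero_iff.2 hz)).1
  have hcomp : ∀ {z : ℂ}, ‖z‖ < 1 → DifferentiableAt ℂ (fun z => deriv f (z₀ * z)) z := fun hz =>
    (hf' (hmul hz)).comp _ (by fun_prop)
  have hpow : ∀ {z : ℂ}, ‖z‖ < 1 →
      DifferentiableAt ℂ (fun z : ℂ => (1 - z) ^ ((2 * α - 1 : ℝ) : ℂ)) z := fun hz =>
    (hasDerivAt_one_sub_cpow _ hz).differentiableAt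
  refine isCaratheodoryOfOrder_half_of_neg_half_lt_re (fun z hz => ?_) ?_
    (fun z hz => div_ne_zero (hne (hmul hz)) (one_sub_cpow_ne_zero _ hz)) fun z hz => ?_
  · rw [mem_ball_zero_iff] at hz
    exact ((hcomp hz).div (hpow hz) (one_sub_cpow_ne_zero _ hz)).differentiableWithinAt
  · simp only [mul_zero, hf.2.2.1, sub_zero, Complex.one_cpow, div_one]
  · have hlog : z * logDeriv (fun z => deriv f (z₀ * z)) z =
        z₀ * z * logDeriv (deriv f) (z₀ * z) := by
      rw [logDeriv_apply, deriv_comp_mul_left, logDeriv_apply, smul_eq_mul]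
      ring
    rw [logDeriv_div (f := fun z => deriv f (z₀ * z))
      (g := fun z => (1 - z) ^ ((2 * α - 1 : ℝ) : ℂ)) z (hne (hmul hz)) (one_sub_cpow_ne_zero _ hz)
      (hcomp hz) (hpow hz), mul_sub, hlog, mul_logDeriv_one_sub_cpow _ hz, sub_neg_eq_add,
      Complex.add_re, Complex.re_ofReal_mul]
    nlinarith [hf.sub_one_lt_re_mul_logDeriv_deriv (hmul hz), neg_half_lt_re_div_one_sub hz]

theorem div_eq_integral_deriv {R : ℝ} (hf : DifferentiableOn ℂ f (Metric.ball 0 R))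
    (hf0 : f 0 = 0) {z : ℂ} (hz : ‖z‖ < R) (hz0 : z ≠ 0) :
    f z / z = ∫ s in Ioo (0 : ℝ) 1, deriv f (z * s) := by
  have hmem : ∀ s ∈ Icc (0 : ℝ) 1, (0 : ℂ) + s • z ∈ Metric.ball (0 : ℂ) R := fun s hs => by
    rw [zero_add, mem_ball_zero_iff, norm_smul, Real.norm_of_nonneg hs.1]
    exact (mul_le_of_le_one_left (norm_nonneg z) hs.2).trans_lt hz
  have h := intervalIntegral.integral_unitInterval_deriv_eq_sub (f := f) (f' := deriv f)
    ((hf.deriv Metric.isOpen_ball).continuousOn.comp (by fun_prop) hmem)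
    fun s hs => (hf.differentiableAt (Metric.isOpen_ball.mem_nhds (hmem s hs))).hasDerivAt
  simp only [zero_add, hf0, sub_zero, smul_eq_mul, Complex.real_smul, mul_comm _ z] at h
  rw [← h, mul_div_cancel_left₀ _ hz0, intervalIntegral.integral_of_le zero_le_one,
    integral_Ioc_eq_integral_Ioo]

theorem integrable_mul_one_sub_rpow_mul_inv {β : ℝ} (hβ : 0 < β) (e : ℂ) :
    Integrable (fun s : ℝ => e * ((1 - s) ^ β : ℝ) * ((1 - ‖(s : ℂ)‖ : ℝ)⁻¹ : ℝ))
      (volume.restrict (Ioo 0 1)) := by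
  refine ((integrableOn_Ioo_one_sub_rpow hβ).ofReal.const_mul e).congr
    (ae_restrict_of_forall_mem measurableSet_Ioo fun s hs => ?_)
  have hs1 : 0 < 1 - s := sub_pos.2 hs.2
  simp only [Complex.norm_of_nonneg hs.1.le, mul_assoc, ← Complex.ofReal_mul,
    Real.rpow_sub_one hs1.ne', div_eq_mul_inv]
  rfl

theorem IsConvexOfOrder.cos_div_le_re_exp_mul_div (hf : IsConvexOfOrder α f) (hα0 : 1 / 2 < α)
    (hα1 : α < 1) {t : ℝ} (ht0 : α * π ≤ t) (ht1 : t ≤ π) {z : ℂ} (hz : ‖z‖ < 1) (hz0 : z ≠ 0) :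
    Real.cos t / (2 * α - 1) ≤ (Complex.exp (t * Complex.I) * (f z / z)).re := by
  have hβ0 : 0 < 2 * α - 1 := by linarith
  have hp1 : ∀ᵐ s : ℝ ∂volume.restrict (Ioo 0 1), ‖(s : ℂ)‖ < 1 :=
    ae_restrict_of_forall_mem measurableSet_Ioo fun s hs => by
      rw [Complex.norm_of_nonneg hs.1.le]
      exact hs.2
  refine ((hf.isCaratheodoryOfOrder hα0.le hz).le_re_integral_mul_comp
    (p := fun s : ℝ => (s : ℂ))
    (g := fun s : ℝ => Complex.exp (t * Complex.I) * ((1 - s) ^ (2 * α - 1) : ℝ))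
    (by fun_prop) hp1 (Measurable.aestronglyMeasurable (by fun_prop))
    (integrable_mul_one_sub_rpow_mul_inv hβ0 _)
    fun ζ hζ => cos_div_le_re_integral_mul_div_sub hβ0 (by linarith) (by linarith) ht1 hζ).trans_eq
    ?_
  rw [div_eq_integral_deriv hf.1 hf.2.1 hz hz0, ← integral_const_mul]
  congr 1
  refine setIntegral_congr_fun measurableSet_Ioo fun s hs => ?_
  have hs1 : 0 < 1 - s := sub_pos.2 hs.2
  have hpow : (((1 - s) ^ (2 * α - 1) : ℝ) : ℂ) ≠ 0 :=
    Complex.ofReal_ne_zero.2 (Real.rpow_pos_of_pos hs1 _).ne'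
  have hcast : (1 - (s : ℂ)) ^ ((2 * α - 1 : ℝ) : ℂ) = ((1 - s) ^ (2 * α - 1) : ℝ) := by
    rw [Complex.ofReal_cpow hs1.le]
    push_cast
    rfl
  simp only [hcast, mul_assoc, mul_div_cancel₀ _ hpow]

theorem hasDerivAt_kfun (hα : α ≠ 1 / 2) {z : ℂ} (hz : ‖z‖ < 1) :
    HasDerivAt (kfun α) ((1 - z) ^ ((2 * α - 2 : ℝ) : ℂ)) z := by
  have hc : ((2 * α - 1 : ℝ) : ℂ) ≠ 0 := Complex.ofReal_ne_zero.2 fun h => hα (by linarith)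
  have hk : kfun α = fun z : ℂ => ((1 - z) ^ ((2 * α - 1 : ℝ) : ℂ) - 1) /
      -((2 * α - 1 : ℝ) : ℂ) := by
    funext z
    rw [kfun, if_neg hα, ← Complex.ofReal_neg, neg_sub]
  have hexp : ((2 * α - 2 : ℝ) : ℂ) = ((2 * α - 1 : ℝ) : ℂ) - 1 := by push_cast; ring
  rw [hk, hexp]
  refine (((hasDerivAt_one_sub_cpow _ hz).sub_const 1).div_const _).congr_deriv ?_
  field_simp

theorem isConvexOfOrder_kfun (hα : α ≠ 1 / 2) (hα1 : α < 1) : IsConvexOfOrder α (kfun α) := by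
  have hderiv : EqOn (deriv (kfun α)) (fun z => (1 - z) ^ ((2 * α - 2 : ℝ) : ℂ)) unitDisk :=
    fun z hz => (hasDerivAt_kfun hα (mem_ball_zero_iff.1 hz)).deriv
  refine ⟨fun z hz => (hasDerivAt_kfun hα
      (mem_ball_zero_iff.1 hz)).differentiableAt.differentiableWithinAt, ?_, ?_, fun z hz => ?_⟩
  · rw [kfun, if_neg hα, sub_zero, Complex.one_cpow, sub_self, zero_div]
  · simp only [hderiv (Metric.mem_ball_self one_pos), sub_zero, Complex.one_cpow]
  · have hz1 := mem_ball_zero_iff.1 hz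
    have hlog : z * logDeriv (deriv (kfun α)) z = (2 - 2 * α : ℝ) * (z / (1 - z)) := by
      rw [logDeriv_congr_nhds (hderiv.eventuallyEq_of_mem (Metric.isOpen_ball.mem_nhds hz))
        |>.self_of_nhds, mul_logDeriv_one_sub_cpow _ hz1, ← neg_mul, ← Complex.ofReal_neg, neg_sub]
    refine ⟨by rw [hderiv hz]; exact one_sub_cpow_ne_zero _ hz1, ?_⟩
    rw [mul_div_assoc, ← logDeriv_apply, hlog, Complex.add_re, Complex.one_re,
      Complex.re_ofReal_mul]
    nlinarith [neg_half_lt_re_div_one_sub hz1]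

theorem tendsto_kfun_div (hα : 1 / 2 < α) :
    Tendsto (fun x : ℝ => kfun α x / x) (𝓝[<] 1) (𝓝 ((1 / (2 * α - 1) : ℝ) : ℂ)) := by
  have hβ0 : 0 < 2 * α - 1 := by linarith
  have hlim : Tendsto (fun x : ℝ => (((1 - x) ^ (2 * α - 1) - 1) / (1 - 2 * α) / x : ℝ)) (𝓝[<] 1)
      (𝓝 (((1 - 1) ^ (2 * α - 1) - 1) / (1 - 2 * α) / 1)) := by
    have hpow : ContinuousAt (fun x : ℝ => (1 - x) ^ (2 * α - 1)) 1 :=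
      ContinuousAt.rpow_const (by fun_prop) (Or.inr hβ0.le)
    have hcont : ContinuousAt (fun x : ℝ => ((1 - x) ^ (2 * α - 1) - 1) / (1 - 2 * α) / x) 1 :=
      ((hpow.sub continuousAt_const).div_const _).div continuousAt_id one_ne_zero
    exact hcont.tendsto.mono_left nhdsWithin_le_nhds
  rw [sub_self, Real.zero_rpow hβ0.ne', zero_sub, div_one, ← neg_sub (2 * α) 1,
    neg_div_neg_eq] at hlim
  refine ((Complex.continuous_ofReal.tendsto _).comp hlim).congr' ?_
  filter_upwards [self_mem_nhdsWithin] with x hx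
  have hx1 : 0 ≤ 1 - x := sub_nonneg.2 (mem_Iio.1 hx).le
  rw [kfun, if_neg hα.ne', Function.comp_apply]
  push_cast [Complex.ofReal_cpow hx1]
  ring

theorem tendsto_re_exp_mul_kfun_div (hα : 1 / 2 < α) (t : ℝ) :
    Tendsto (fun x : ℝ => (Complex.exp (t * Complex.I) * (kfun α x / x)).re) (𝓝[<] 1)
      (𝓝 (Real.cos t / (2 * α - 1))) := by
  have h := (Complex.continuous_re.tendsto _).comp
    ((tendsto_kfun_div hα).const_mul (Complex.exp (t * Complex.I)))
  rwa [Complex.re_mul_ofReal, Complex.exp_ofReal_mul_I_re, mul_one_div] at h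

end Convex

/-- for `1/2 < α < 1` and `απ ≤ t ≤ π`,
`Q_α(t) = inf {Re(e^{it} f(z)/z) : f ∈ K(α), z ∈ 𝔻 \ {0}} = cos t/(2α-1)`. -/
theorem Q_large_alpha (α : ℝ) (hα0 : 1 / 2 < α) (hα1 : α < 1)
    (t : ℝ) (ht0 : α * Real.pi ≤ t) (ht1 : t ≤ Real.pi) :
    sInf {x : ℝ | ∃ f : ℂ → ℂ, IsConvexOfOrder α f ∧
        ∃ z ∈ unitDisk, z ≠ 0 ∧
          x = (Complex.exp ((t : ℂ) * Complex.I) * (f z / z)).re}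
      = Real.cos t / (2 * α - 1) := by
  have hmem : ∀ x ∈ Ioo (0 : ℝ) 1, (x : ℂ) ∈ unitDisk ∧ (x : ℂ) ≠ 0 := fun x hx =>
    ⟨mem_ball_zero_iff.2 ((Complex.norm_of_nonneg hx.1.le).trans_lt hx.2),
      Complex.ofReal_ne_zero.2 hx.1.ne'⟩
  have hk := isConvexOfOrder_kfun hα0.ne' hα1
  refine IsGLB.csInf_eq ⟨?_, fun b hb => ?_⟩ ?_
  · rintro x ⟨f, hf, z, hz, hz0, rfl⟩
    exact hf.cos_div_le_re_exp_mul_div hα0 hα1 ht0 ht1 (mem_ball_zero_iff.1 hz) hz0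
  · refine ge_of_tendsto (tendsto_re_exp_mul_kfun_div hα0 t) ?_
    filter_upwards [Ioo_mem_nhdsLT zero_lt_one] with x hx
    exact hb ⟨kfun α, hk, x, (hmem x hx).1, (hmem x hx).2, rfl⟩
  · have hhalf := hmem (1 / 2) (by norm_num)
    exact ⟨_, kfun α, hk, _, hhalf.1, hhalf.2, rfl⟩
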